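/- arXiv:2509.05912 — 3 statements merged into one kernel-verified Lean document; each statement's English description precedes it below -/
import Mathlib

section
/- Let t : 𝕆 × 𝕆 → 𝕆 × 𝕆 be defined by t(x,y) = (ȳ, x·ȳ). Then for all x, y ∈ 𝕆 with ‖x‖ = ‖y‖ = 1, one has t(t(t(x,y))) = (x,y); that is, t has order 3 on S⁷ × S⁷. Moreover t(t(x,y)) = (y·x̄, x̄) for such x, y. -/
noncomputable section

/-- The octonions as the Cayley–Dickson double of the quaternions. -/
abbrev Oct : Type := Quaternion ℝ × Quaternion ℝ

namespace Oct

/-- Cayley–Dickson multiplication: (a,b)·(c,d) = (ac − d̄b, da + bc̄). -/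
def mul (x y : Oct) : Oct :=
  (x.1 * y.1 - star y.2 * x.2, y.2 * x.1 + x.2 * star y.1)

/-- The unit 1 = (1,0). -/
def one : Oct := (1, 0)

/-- Octonionic conjugation κ(a,b) = (ā, −b). -/
def conj (x : Oct) : Oct := (star x.1, -x.2)

/-- The squared Euclidean norm ‖(a,b)‖² = ‖a‖² + ‖b‖². -/
def normSq (x : Oct) : ℝ := ‖x.1‖ ^ 2 + ‖x.2‖ ^ 2

/-- Left multiplication L(s) : y ↦ s·y. -/
def L (s : Oct) : Oct → Oct := fun y => mul s y

/-- A linear automorphism of 𝕆 is an isometry if it preserves the Euclidean norm. -/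
def IsIsometry (A : Oct ≃ₗ[ℝ] Oct) : Prop := ∀ x, normSq (A x) = normSq x

/-- A triality triple: ℝ-linear isometric bijections with B(x·y) = (Cx)·(Ay). -/
def IsTriality (A B C : Oct ≃ₗ[ℝ] Oct) : Prop :=
  IsIsometry A ∧ IsIsometry B ∧ IsIsometry C ∧
    ∀ x y : Oct, B (mul x y) = mul (C x) (A y)

/-- Octonionic conjugation κ as an ℝ-linear equivalence. -/
def kappa : Oct ≃ₗ[ℝ] Oct where
  toFun := conj
  invFun := conj
  left_inv := fun x => by simp [conj]
  right_inv := fun x => by simp [conj]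
  map_add' := fun x y => by simp [conj, Prod.ext_iff, star_add, neg_add, add_comm]
  map_smul' := fun r x => by simp [conj, Prod.ext_iff]

/-- D ↦ κ∘D∘κ. -/
def conjOp (D : Oct ≃ₗ[ℝ] Oct) : Oct ≃ₗ[ℝ] Oct := kappa.trans (D.trans kappa)

/-- Triples of ℝ-linear bijections of 𝕆. -/
abbrev Triple := (Oct ≃ₗ[ℝ] Oct) × (Oct ≃ₗ[ℝ] Oct) × (Oct ≃ₗ[ℝ] Oct)

/-- The triality map τ(A,B,C) = (κBκ, κCκ, A). -/
def tauMap (T : Triple) : Triple := (conjOp T.2.1, conjOp T.2.2, T.1)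

/-- The outer involution σ(A,B,C) = (B, A, κCκ). -/
def sigmaMap (T : Triple) : Triple := (T.2.1, T.1, conjOp T.2.2)

/-- The induced map on S⁷ × S⁷: t(x,y) = (ȳ, x·ȳ). -/
def tS (p : Oct × Oct) : Oct × Oct := (conj p.2, mul p.1 (conj p.2))

/-- The swap s(x,y) = (y,x). -/
def swap (p : Oct × Oct) : Oct × Oct := (p.2, p.1)

end Oct

open Oct

/-! The octonions are not associative, but `x̄(xy) = ‖x‖² y`, and conjugation, an anti-automorphism,
turns this into `(xȳ)y = ‖y‖² x`. The first identity computes `t²` and the second `t³`, on all of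
`𝕆 × 𝕆`, up to factors `‖x‖²` and `‖y‖²`. -/

namespace Oct

theorem conj_conj (x : Oct) : conj (conj x) = x :=
  kappa.left_inv x

theorem conj_smul (r : ℝ) (x : Oct) : conj (r • x) = r • conj x :=
  kappa.map_smul r x

theorem conj_mul (x y : Oct) : conj (mul x y) = mul (conj y) (conj x) := by
  simp only [conj, mul, star_sub, star_mul, star_star, star_neg, Prod.mk.injEq]
  constructor <;> noncomm_ring

theorem mul_smul_right (r : ℝ) (x y : Oct) : mul x (r • y) = r • mul x y := by
  simp [mul, smul_sub, smul_add]

theorem star_mul_self_eq_norm_sq (q : Quaternion ℝ) :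
    star q * q = ((‖q‖ ^ 2 : ℝ) : Quaternion ℝ) := by
  rw [Quaternion.star_mul_self, Quaternion.normSq_eq_norm_mul_self, sq]

theorem self_mul_star_eq_norm_sq (q : Quaternion ℝ) :
    q * star q = ((‖q‖ ^ 2 : ℝ) : Quaternion ℝ) := by
  rw [Quaternion.self_mul_star, Quaternion.normSq_eq_norm_mul_self, sq]

theorem conj_mul_self_left (x y : Oct) : mul (conj x) (mul x y) = normSq x • y := by
  obtain ⟨a, b⟩ := x
  obtain ⟨c, d⟩ := y
  ext1
  · calc
      star a * (a * c - star d * b) - star (d * a + b * star c) * -b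
        = star a * a * c + c * (star b * b) := by
          simp only [star_add, star_mul, star_star]
          noncomm_ring
      _ = (‖a‖ ^ 2 + ‖b‖ ^ 2) • c := by
          rw [star_mul_self_eq_norm_sq, star_mul_self_eq_norm_sq, Quaternion.coe_mul_eq_smul,
            Quaternion.mul_coe_eq_smul, add_smul]
  · calc
      (d * a + b * star c) * star a + -b * star (a * c - star d * b)
        = d * (a * star a) + b * star b * d := by
          simp only [star_sub, star_mul, star_star]
          noncomm_ring
      _ = (‖a‖ ^ 2 + ‖b‖ ^ 2) • d := by
          rw [self_mul_star_eq_norm_sq, self_mul_star_eq_norm_sq, Quaternion.coe_mul_eq_smul,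
            Quaternion.mul_coe_eq_smul, add_smul]

theorem conj_mul_self_right (x y : Oct) : mul (mul x (conj y)) y = normSq y • x := by
  calc
    mul (mul x (conj y)) y = conj (mul (conj y) (mul y (conj x))) := by
      simp only [conj_mul, conj_conj]
    _ = normSq y • x := by
      rw [conj_mul_self_left, conj_smul, conj_conj]

theorem tS_tS (x y : Oct) : tS (tS (x, y)) = (mul y (conj x), normSq y • conj x) := by
  simp only [tS, conj_mul, conj_conj, conj_mul_self_left]

end Oct

theorem tS_order_three_general (x y : Oct) :
    tS (tS (tS (x, y))) = (normSq y • x, (normSq y * normSq x) • y)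
    ∧ tS (tS (x, y)) = (mul y (conj x), normSq y • conj x) := by
  refine ⟨?_, tS_tS x y⟩
  rw [tS_tS x y]
  simp only [tS, conj_smul, conj_conj, mul_smul_right, conj_mul_self_right, smul_smul]

/-- t(x,y) = (ȳ, x·ȳ) has order 3 on S⁷ × S⁷, with
t²(x,y) = (y·x̄, x̄). -/
theorem tS_order_three (x y : Oct) (hx : normSq x = 1) (hy : normSq y = 1) :
    tS (tS (tS (x, y))) = (x, y)
    ∧ tS (tS (x, y)) = (mul y (conj x), conj x) := by
  simpa only [hx, hy, mul_one, one_smul] using tS_order_three_general x y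
end
end

section
/- Let t(x,y) = (ȳ, x·ȳ). For x, y ∈ 𝕆 with ‖x‖ = ‖y‖ = 1, one has t(x,y) = (x,y) if and only if y = x̄ and x·(x·x) = 1. Hence the fixed set of t in S⁷ × S⁷ is {(x, x̄) : x ∈ 𝕆, ‖x‖ = 1, x³ = 1}. -/
noncomputable section

open Oct

namespace Oct

theorem conj_involutive : Function.Involutive conj := fun x => by simp [conj]

theorem normSq_conj (x : Oct) : normSq (conj x) = normSq x := by simp [conj, normSq]

protected theorem mul_one (x : Oct) : mul x one = x := by simp [mul, one]

theorem normSq_eq_quaternion_normSq_add (x : Oct) :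
    normSq x = Quaternion.normSq x.1 + Quaternion.normSq x.2 := by
  simp only [normSq, Quaternion.normSq_eq_norm_mul_self, sq]

/-- `mul` is not associative, so this does not follow from `x̄ · x = ‖x‖²`; the mixed terms cancel
within each quaternionic coordinate. -/
theorem conj_mul_mul (x z : Oct) : mul (conj x) (mul x z) = normSq x • z := by
  obtain ⟨a, b⟩ := x
  obtain ⟨c, d⟩ := z
  rw [normSq_eq_quaternion_normSq_add, add_smul]
  refine Prod.ext ?_ ?_
  · calc star a * (a * c - star d * b) - star (d * a + b * star c) * -b
        = star a * a * c + c * (star b * b) := by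
          simp only [star_add, star_mul, star_star]
          noncomm_ring
      _ = Quaternion.normSq a • c + Quaternion.normSq b • c := by
          rw [Quaternion.star_mul_self, Quaternion.star_mul_self, Quaternion.coe_mul_eq_smul,
            Quaternion.mul_coe_eq_smul]
  · calc (d * a + b * star c) * star a + -b * star (a * c - star d * b)
        = d * (a * star a) + b * star b * d := by
          simp only [star_sub, star_mul, star_star]
          noncomm_ring
      _ = Quaternion.normSq a • d + Quaternion.normSq b • d := by
          rw [Quaternion.self_mul_star, Quaternion.self_mul_star, Quaternion.mul_coe_eq_smul,
            Quaternion.coe_mul_eq_smul]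

theorem mul_conj_mul (x z : Oct) : mul x (mul (conj x) z) = normSq x • z := by
  simpa only [conj_involutive x, normSq_conj] using conj_mul_mul (conj x) z

theorem mul_eq_iff_eq_conj_mul {x : Oct} (hx : normSq x = 1) (y z : Oct) :
    mul x y = z ↔ y = mul (conj x) z := by
  constructor
  · rintro rfl
    rw [conj_mul_mul, hx, one_smul]
  · rintro rfl
    rw [mul_conj_mul, hx, one_smul]

theorem cube_eq_one_iff_sq_eq_conj {x : Oct} (hx : normSq x = 1) :
    mul x (mul x x) = one ↔ mul x x = conj x := by
  rw [mul_eq_iff_eq_conj_mul hx, Oct.mul_one]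

theorem tS_eq_self_iff (x y : Oct) : tS (x, y) = (x, y) ↔ y = conj x ∧ mul x x = conj x := by
  rw [tS, Prod.mk.injEq, conj_involutive.eq_iff]
  refine and_congr_right ?_
  rintro rfl
  rw [conj_involutive x]

theorem tS_eq_self_iff_cube_eq_one {x : Oct} (hx : normSq x = 1) (y : Oct) :
    tS (x, y) = (x, y) ↔ y = conj x ∧ mul x (mul x x) = one := by
  rw [tS_eq_self_iff, cube_eq_one_iff_sq_eq_conj hx]

end Oct

/-- for unit x, y, t(x,y) = (x,y) iff y = x̄ and x³ = 1; hence the fixed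
set of t in S⁷ × S⁷ is {(x, x̄) : ‖x‖ = 1, x³ = 1}. -/
theorem tS_fixed_points :
    (∀ x y : Oct, normSq x = 1 → normSq y = 1 →
      (tS (x, y) = (x, y) ↔ (y = conj x ∧ mul x (mul x x) = one)))
    ∧ {p : Oct × Oct | normSq p.1 = 1 ∧ normSq p.2 = 1 ∧ tS p = p}
        = {p : Oct × Oct | ∃ x : Oct, normSq x = 1 ∧ mul x (mul x x) = one
            ∧ p = (x, conj x)} := by
  refine ⟨fun x y hx _ => tS_eq_self_iff_cube_eq_one hx y, ?_⟩
  ext ⟨x, y⟩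
  constructor
  · rintro ⟨hx : normSq x = 1, -, hfixed⟩
    obtain ⟨rfl, hcube⟩ := (tS_eq_self_iff_cube_eq_one hx y).1 hfixed
    exact ⟨x, hx, hcube, rfl⟩
  · rintro ⟨x, hx, hcube, ⟨⟩⟩
    exact ⟨hx, (normSq_conj x).trans hx, (tS_eq_self_iff_cube_eq_one hx _).2 ⟨rfl, hcube⟩⟩
end
end

section
/- Let s ∈ 𝕆 with ‖s‖ = 1, s·(s·s) = 1 and s ≠ 1. Then the intersection of the sets {(x, x̄) : x ∈ 𝕆, ‖x‖ = 1, x·(x·x) = 1} and {(s·u, s̄·ū) : u ∈ 𝕆, ‖u‖ = 1, u·(u·u) = 1} in 𝕆 × 𝕆 equals {(1,1), (s, s̄), (s̄, s)}. (This identifies the maximal antipodal set through o = (1,1) in the outer 3-symmetric space S⁷ × S⁷ = Spin₈/G₂ as a 3-point set, on which the outer involution σ fixes (1,1) and interchanges the other two points.) -/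
noncomputable section

open Oct

/-!
If `s ≠ 1` is a cube root of unity in a nonassociative ring without zero divisors, then
`s² + s + 1 = 0`. For a cube root of unity `u` commuting with `s`, this gives
`(u - 1) ((u - s) (u - s²)) = u³ - 1 = 0` by distributivity alone, so `u` is `1`, `s` or `s²`.
When `s s̄ = 1`, moreover `s² = s̄`. A common point `(x, x̄) = (s u, s̄ ū)` of the two sets forces
`s` and `u` to commute, because `x̄ = ū s̄`. The octonions have no zero divisors because their
norm is multiplicative.
-/

theorem commute_of_star_mul_eq {M : Type*} [Mul M] [StarMul M] {x y : M}
    (h : star (x * y) = star x * star y) : Commute x y :=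
  star_injective (h.trans (star_mul y x).symm)

section NonAssocRing

variable {R : Type*} [NonAssocRing R]

theorem sub_one_mul_mul_self_add_self_add_one (x : R) :
    (x - 1) * (x * x + x + 1) = x * (x * x) - 1 := by
  simp only [sub_mul, mul_add, one_mul, mul_one]
  abel

theorem cube_eq_one_of_mul_self_add_self_add_one_eq_zero {s : R} (hs : s * s + s + 1 = 0) :
    s * (s * s) = 1 := by
  rw [← sub_eq_zero, ← sub_one_mul_mul_self_add_self_add_one, hs, mul_zero]

theorem sub_mul_sub_mul_self_of_commute {s u : R} (hs : s * s + s + 1 = 0) (hsu : Commute s u) :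
    (u - s) * (u - s * s) = u * u + u + 1 := by
  have hcube := cube_eq_one_of_mul_self_add_self_add_one_eq_zero hs
  calc (u - s) * (u - s * s)
      = u * u + u + 1 - u * (s * s + s + 1) + (u * s - s * u) + (s * (s * s) - 1) := by
        simp only [sub_mul, mul_sub, mul_add, mul_one]; abel
    _ = u * u + u + 1 := by simp only [hs, hsu.eq, hcube, mul_zero, sub_self, sub_zero, add_zero]

variable [NoZeroDivisors R]

theorem mul_self_add_self_add_one_eq_zero {s : R} (hcube : s * (s * s) = 1) (hs1 : s ≠ 1) :
    s * s + s + 1 = 0 := by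
  have hfactor := sub_one_mul_mul_self_add_self_add_one s
  rw [hcube, sub_self] at hfactor
  exact (mul_eq_zero.mp hfactor).resolve_left (sub_ne_zero.mpr hs1)

theorem eq_one_or_eq_or_eq_mul_self_of_commute {s u : R} (hs : s * (s * s) = 1) (hs1 : s ≠ 1)
    (hu : u * (u * u) = 1) (hsu : Commute s u) : u = 1 ∨ u = s ∨ u = s * s := by
  have hfactor : (u - 1) * ((u - s) * (u - s * s)) = 0 := by
    rw [sub_mul_sub_mul_self_of_commute (mul_self_add_self_add_one_eq_zero hs hs1) hsu,
      sub_one_mul_mul_self_add_self_add_one, hu, sub_self]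
  simpa only [mul_eq_zero, sub_eq_zero] using hfactor

theorem mul_self_eq_of_cube_eq_one_of_mul_eq_one {s t : R} (hcube : s * (s * s) = 1)
    (hst : s * t = 1) : s * s = t := by
  have hdiff : s * (s * s - t) = 0 := by rw [mul_sub, hcube, hst, sub_self]
  rcases mul_eq_zero.mp hdiff with rfl | h
  · have : Subsingleton R := subsingleton_of_zero_eq_one (by rw [← hst, zero_mul])
    exact Subsingleton.elim _ _
  · exact sub_eq_zero.mp h

theorem mul_eq_one_symm_of_cube_eq_one {s t : R} (hcube : s * (s * s) = 1) (hst : s * t = 1) :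
    t * s = 1 := by
  obtain rfl | hs1 := eq_or_ne s 1
  · rwa [one_mul, ← mul_one t] at hst
  have ht : t = -s - 1 := by
    rw [← mul_self_eq_of_cube_eq_one_of_mul_eq_one hcube hst, ← sub_eq_zero,
      ← mul_self_add_self_add_one_eq_zero hcube hs1]
    abel
  calc t * s = s * t := by
        simp only [ht, sub_mul, mul_sub, neg_mul, mul_neg, one_mul, mul_one]
    _ = 1 := hst

theorem maximal_antipodal_set_general [StarMul R] (s : R) (hs : s * star s = 1)
    (hcube : s * (s * s) = 1) (hs1 : s ≠ 1) :
    {p : R × R | ∃ x : R, x * star x = 1 ∧ x * (x * x) = 1 ∧ p = (x, star x)}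
      ∩ {p : R × R | ∃ u : R, u * star u = 1 ∧ u * (u * u) = 1
          ∧ p = (s * u, star s * star u)}
    = {(1, 1), (s, star s), (star s, s)} := by
  have hsq : s * s = star s := mul_self_eq_of_cube_eq_one_of_mul_eq_one hcube hs
  have hstar : star s * s = 1 := mul_eq_one_symm_of_cube_eq_one hcube hs
  have hstar_sq : star s * star s = s := by rw [← star_mul, hsq, star_star]
  have hstar_unit : star s * star (star s) = 1 := by rw [star_star, hstar]
  have hstar_cube : star s * (star s * star s) = 1 := by rw [hstar_sq, hstar]
  ext p
  constructor
  · rintro ⟨⟨_, -, -, rfl⟩, u, -, hu, hp⟩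
    obtain ⟨rfl, hsu⟩ := Prod.mk.inj hp
    rcases eq_one_or_eq_or_eq_mul_self_of_commute hcube hs1 hu (commute_of_star_mul_eq hsu) with
      rfl | rfl | rfl
    · simp
    · simp [hsq]
    · simp [hcube]
  · rintro (rfl | rfl | rfl)
    · exact ⟨⟨1, by simp⟩, star s, hstar_unit, hstar_cube, by rw [star_star, hs, hstar]⟩
    · exact ⟨⟨s, hs, hcube, rfl⟩, 1, by simp⟩
    · exact ⟨⟨star s, hstar_unit, hstar_cube, by rw [star_star]⟩, s, hs, hcube,
        by rw [hsq, hstar_sq]⟩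

end NonAssocRing

namespace Oct

protected theorem mul_add (x y z : Oct) : mul x (y + z) = mul x y + mul x z := by
  ext1 <;> simp only [mul, Prod.fst_add, Prod.snd_add, star_add, mul_add, add_mul] <;> abel

protected theorem add_mul (x y z : Oct) : mul (x + y) z = mul x z + mul y z := by
  ext1 <;> simp only [mul, Prod.fst_add, Prod.snd_add, mul_add, add_mul] <;> abel

protected theorem zero_mul (x : Oct) : mul 0 x = 0 := by simp [mul]

protected theorem mul_zero (x : Oct) : mul x 0 = 0 := by simp [mul]

protected theorem one_mul (x : Oct) : mul one x = x := by simp [mul, one]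

theorem mul_conj_self (x : Oct) : mul x (conj x) = (((normSq x : ℝ) : Quaternion ℝ), 0) := by
  simp [mul, conj, normSq, Quaternion.self_mul_star, Quaternion.star_mul_self,
    Quaternion.normSq_eq_norm_mul_self, sq]

theorem normSq_eq_one_iff_mul_conj_self (x : Oct) : normSq x = 1 ↔ mul x (conj x) = one := by
  rw [mul_conj_self, one, Prod.mk.injEq, ← Quaternion.coe_one, Quaternion.coe_inj]
  exact (and_iff_left rfl).symm

theorem normSq_eq_zero {x : Oct} : normSq x = 0 ↔ x = 0 := by
  rw [normSq, add_eq_zero_iff_of_nonneg (sq_nonneg _) (sq_nonneg _)]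
  simp [Prod.ext_iff]

open scoped InnerProductSpace in
theorem normSq_mul (x y : Oct) : normSq (mul x y) = normSq x * normSq y := by
  obtain ⟨a, b⟩ := x
  obtain ⟨c, d⟩ := y
  -- Both sides are the real part of `a c b̄ d`, up to a cyclic permutation of the factors.
  have hcross : ⟪a * c, star d * b⟫_ℝ = ⟪d * a, b * star c⟫_ℝ := by
    simp only [Quaternion.inner_def, star_mul, star_star, Quaternion.re_mul, Quaternion.imI_mul,
      Quaternion.imJ_mul, Quaternion.imK_mul]
    ring
  simp only [normSq, mul, norm_sub_sq_real, norm_add_sq_real, hcross, norm_mul, norm_star]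
  ring

protected theorem eq_zero_or_eq_zero_of_mul_eq_zero {x y : Oct} (hxy : mul x y = 0) :
    x = 0 ∨ y = 0 := by
  have hnorm : normSq x * normSq y = 0 := by rw [← normSq_mul, normSq_eq_zero, hxy]
  exact (mul_eq_zero.mp hnorm).imp normSq_eq_zero.mp normSq_eq_zero.mp

end Oct

/-- The octonions as a nonassociative ring with involution. A synonym of `Oct` is needed because
`Oct`, a product of two rings, already carries the componentwise multiplication and `star`. -/
def Octonion : Type := Oct

namespace Octonion

instance : AddCommGroup Octonion := inferInstanceAs (AddCommGroup Oct)

instance : NonAssocRing Octonion where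
  mul := Oct.mul
  one := Oct.one
  left_distrib := Oct.mul_add
  right_distrib := Oct.add_mul
  zero_mul := Oct.zero_mul
  mul_zero := Oct.mul_zero
  one_mul := Oct.one_mul
  mul_one := Oct.mul_one

instance : NoZeroDivisors Octonion where
  eq_zero_or_eq_zero_of_mul_eq_zero := Oct.eq_zero_or_eq_zero_of_mul_eq_zero

instance : StarMul Octonion where
  star := Oct.conj
  star_involutive := Oct.kappa.left_inv
  star_mul := Oct.conj_mul

end Octonion

/-- for a nontrivial unit cube root of unity s, the intersection
Fix(Γ) ∩ g·Fix(Γ) (with g = (L(s), L(s̄))) equals {(1,1), (s,s̄), (s̄,s)}: the maximal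
antipodal set through o = (1,1) of the outer 3-symmetric space S⁷×S⁷ = Spin₈/G₂. -/
theorem maximal_antipodal_set (s : Oct) (hs : normSq s = 1)
    (hcube : mul s (mul s s) = one) (hs1 : s ≠ one) :
    {p : Oct × Oct | ∃ x : Oct, normSq x = 1 ∧ mul x (mul x x) = one ∧ p = (x, conj x)}
      ∩ {p : Oct × Oct | ∃ u : Oct, normSq u = 1 ∧ mul u (mul u u) = one
          ∧ p = (mul s u, mul (conj s) (conj u))}
    = {((one : Oct), (one : Oct)), (s, conj s), (conj s, s)} := by
  simp only [normSq_eq_one_iff_mul_conj_self] at hs ⊢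
  exact maximal_antipodal_set_general (R := Octonion) s hs hcube hs1
end
end
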